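/- Let (a_{n,i})_{1≤i≤n, n≥1} be a triangular array of random variables on the same probability space such that sup_{1≤i≤n} |a_{n,i}| → 0 almost surely as n→∞. Then (1/n)·Σ_{i=2}^n (ε_i + a_{n,i})² converges to σ²/(1−φ²) almost surely as n→∞. -/

import Mathlib

open MeasureTheory ProbabilityTheory Filter Set Topology

/-
A solution of the recursion is `X n = Y n + φ ^ n * X 0`, where `Y` solves it from `Y 0 = 0`.
Squaring and summing `Y (n + 1) = φ Y n + U n` gives, for `S n = ∑ i < n, Y i ^ 2`,
`S (n + 1) = φ ^ 2 * S n + 2 * φ * ∑ i < n, Y i * U i + ∑ i < n, U i ^ 2`,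
so `S n / n` has limit `𝔼[U ^ 2] / (1 - φ ^ 2)` by the strong law for `U i ^ 2`, as soon as the
cross sum is `o(n)`. The products `Y i * U i` are orthogonal and bounded in `L²`, so a strong law
for orthogonal sequences applies. The transient `φ ^ i * X 0` and the array `a` tend to zero in
quadratic mean over `i ≤ n`, which by Cauchy-Schwarz leaves the limit unchanged.
-/

section Averages

lemma isLittleO_of_norm_le_mul_add {E F : Type*} [NormedAddCommGroup E] [NormedAddCommGroup F]
    {e : ℕ → E} {w : ℕ → F} {g : ℕ → ℝ} {ρ : ℝ} (hρ₀ : 0 ≤ ρ) (hρ₁ : ρ < 1)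
    (hg : Monotone g) (hg_top : Tendsto g atTop atTop)
    (he : ∀ n, ‖e (n + 1)‖ ≤ ρ * ‖e n‖ + ‖w n‖) (hw : w =o[atTop] g) : e =o[atTop] g := by
  rw [Asymptotics.isLittleO_iff] at hw ⊢
  intro c hc
  obtain ⟨N, hN⟩ := eventually_atTop.1
    ((hw (show 0 < c / 2 * (1 - ρ) by nlinarith)).and (hg_top.eventually_ge_atTop 0))
  have bound : ∀ n ≥ N, ‖e n‖ ≤ ‖e N‖ + c / 2 * g n := by
    intro n hn
    induction n, hn using Nat.le_induction with
    | base => nlinarith [(hN N le_rfl).2]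
    | succ n hn ih =>
      obtain ⟨hwn, hgn⟩ := hN n hn
      rw [Real.norm_of_nonneg hgn] at hwn
      calc ‖e (n + 1)‖ ≤ ρ * ‖e n‖ + ‖w n‖ := he n
        _ ≤ ρ * (‖e N‖ + c / 2 * g n) + c / 2 * (1 - ρ) * g n := by gcongr
        _ = ρ * ‖e N‖ + c / 2 * g n := by ring
        _ ≤ ‖e N‖ + c / 2 * g (n + 1) := by
          gcongr
          · exact mul_le_of_le_one_left (norm_nonneg _) hρ₁.le
          · exact hg n.le_succ
  filter_upwards [eventually_ge_atTop N, hg_top.eventually_ge_atTop (‖e N‖ / (c / 2))]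
    with n hn hgn
  rw [div_le_iff₀' (half_pos hc)] at hgn
  rw [Real.norm_of_nonneg (hN n hn).2]
  linarith [bound n hn]

lemma isLittleO_natCast_iff_tendsto_div {f : ℕ → ℝ} :
    f =o[atTop] (fun n : ℕ ↦ (n : ℝ)) ↔ Tendsto (fun n : ℕ ↦ f n / n) atTop (𝓝 0) := by
  refine Asymptotics.isLittleO_iff_tendsto' ?_
  filter_upwards [eventually_ne_atTop 0] with n hn hn₀
  exact absurd (Nat.cast_eq_zero.1 hn₀) hn

lemma tendsto_div_of_affine_recurrence {S w : ℕ → ℝ} {ρ s : ℝ} (hρ : |ρ| < 1)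
    (hS : ∀ n, S (n + 1) = ρ * S n + w n)
    (hw : Tendsto (fun n : ℕ ↦ w n / n) atTop (𝓝 s)) :
    Tendsto (fun n : ℕ ↦ S n / n) atTop (𝓝 (s / (1 - ρ))) := by
  set L := s / (1 - ρ) with hL
  have hs : s = L - ρ * L := by
    have : 1 - ρ ≠ 0 := by linarith [le_abs_self ρ]
    rw [hL]; field_simp
  have forcing : (fun n : ℕ ↦ w n - n * s - L) =o[atTop] (fun n : ℕ ↦ (n : ℝ)) := by
    rw [isLittleO_natCast_iff_tendsto_div]
    have h := (hw.sub_const s).sub (tendsto_const_div_atTop_nhds_zero_nat L)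
    rw [sub_self, sub_zero] at h
    refine h.congr' ?_
    filter_upwards [eventually_ne_atTop 0] with n hn
    field_simp
  have error : (fun n : ℕ ↦ S n - n * L) =o[atTop] (fun n : ℕ ↦ (n : ℝ)) := by
    refine isLittleO_of_norm_le_mul_add (abs_nonneg ρ) hρ Nat.mono_cast
      tendsto_natCast_atTop_atTop (fun n ↦ ?_) forcing
    have step : S (n + 1) - (n + 1 : ℕ) * L = ρ * (S n - n * L) + (w n - n * s - L) := by
      rw [hS, hs]; push_cast; ring
    rw [step, ← Real.norm_eq_abs, ← norm_mul]
    exact norm_add_le _ _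
  have h := (isLittleO_natCast_iff_tendsto_div.1 error).add_const L
  rw [zero_add] at h
  refine h.congr' ?_
  filter_upwards [eventually_ne_atTop 0] with n hn
  field_simp
  ring

lemma tendsto_average_sq_of_recurrence {y v : ℕ → ℝ} {φ s : ℝ} (hφ : |φ| < 1)
    (hy : ∀ n, y (n + 1) = φ * y n + v n)
    (hv : Tendsto (fun n : ℕ ↦ (∑ i ∈ Finset.range n, v i ^ 2) / n) atTop (𝓝 s))
    (hyv : Tendsto (fun n : ℕ ↦ (∑ i ∈ Finset.range n, y i * v i) / n) atTop (𝓝 0)) :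
    Tendsto (fun n : ℕ ↦ (∑ i ∈ Finset.range n, y i ^ 2) / n) atTop (𝓝 (s / (1 - φ ^ 2))) := by
  have hφ2 : |φ ^ 2| < 1 := by rw [abs_pow]; exact pow_lt_one₀ (abs_nonneg φ) hφ two_ne_zero
  refine tendsto_div_of_affine_recurrence (w := fun n ↦ y 0 ^ 2 +
    2 * φ * ∑ i ∈ Finset.range n, y i * v i + ∑ i ∈ Finset.range n, v i ^ 2) hφ2 (fun n ↦ ?_) ?_
  · rw [Finset.sum_range_succ']
    simp only [hy, add_sq, mul_pow, Finset.sum_add_distrib, Finset.mul_sum]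
    have : ∀ i, 2 * (φ * y i) * v i = 2 * φ * (y i * v i) := fun i ↦ by ring
    simp only [this]
    ring
  · have h := ((tendsto_const_div_atTop_nhds_zero_nat (y 0 ^ 2)).add
      (hyv.const_mul (2 * φ))).add hv
    simp only [mul_zero, zero_add] at h
    exact h.congr fun n ↦ by ring

lemma tendsto_sum_Icc_div {f : ℕ → ℝ} {L : ℝ} (m : ℕ)
    (hf : Tendsto (fun n : ℕ ↦ (∑ i ∈ Finset.range n, f i) / n) atTop (𝓝 L)) :
    Tendsto (fun n : ℕ ↦ (∑ i ∈ Finset.Icc m n, f i) / n) atTop (𝓝 L) := by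
  have ratio : Tendsto (fun n : ℕ ↦ ((n + 1 : ℕ) : ℝ) / n) atTop (𝓝 1) := by
    simpa [add_comm] using tendsto_add_mul_div_add_mul_atTop_nhds (1 : ℝ) 0 1 one_ne_zero
  have h := ((hf.comp (tendsto_add_atTop_nat 1)).mul ratio).sub
    (tendsto_const_div_atTop_nhds_zero_nat (∑ i ∈ Finset.range m, f i))
  rw [mul_one, sub_zero] at h
  refine h.congr' ?_
  filter_upwards [eventually_ge_atTop m] with n hn
  have hn' : ((n + 1 : ℕ) : ℝ) ≠ 0 := by positivity
  rw [Function.comp_apply, div_mul_div_cancel₀ hn', ← sub_div,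
    ← Finset.sum_Ico_eq_sub f (by lia : m ≤ n + 1), Finset.Ico_add_one_right_eq_Icc]

section Perturbation

variable {α ι : Type*} {l : Filter α} {s : α → Finset ι} {c : α → ℝ}

lemma tendsto_sum_sq_add_div {y b : α → ι → ℝ} {L : ℝ}
    (hy : Tendsto (fun n ↦ (∑ i ∈ s n, y n i ^ 2) / c n) l (𝓝 L))
    (hb : Tendsto (fun n ↦ (∑ i ∈ s n, b n i ^ 2) / c n) l (𝓝 0)) :
    Tendsto (fun n ↦ (∑ i ∈ s n, (y n i + b n i) ^ 2) / c n) l (𝓝 L) := by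
  have cross : Tendsto (fun n ↦ (∑ i ∈ s n, y n i * b n i) / c n) l (𝓝 0) := by
    have h := (hy.mul hb).sqrt
    rw [mul_zero, Real.sqrt_zero] at h
    refine squeeze_zero_norm (fun n ↦ Real.abs_le_sqrt ?_) h
    rw [div_pow, div_mul_div_comm, ← sq]
    gcongr
    exact Finset.sum_mul_sq_le_sq_mul_sq _ _ _
  have h := (hy.add (cross.const_mul 2)).add hb
  simp only [mul_zero, add_zero] at h
  refine h.congr fun n ↦ ?_
  simp only [add_sq, Finset.sum_add_distrib, mul_assoc, ← Finset.mul_sum]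
  ring

lemma tendsto_sum_sq_div_zero_of_forall_abs_lt {a : α → ι → ℝ}
    (hs : ∀ n, (s n).card ≤ c n) (ha : ∀ δ > 0, ∀ᶠ n in l, ∀ i ∈ s n, |a n i| < δ) :
    Tendsto (fun n ↦ (∑ i ∈ s n, a n i ^ 2) / c n) l (𝓝 0) := by
  have hc (n : α) : 0 ≤ c n := (Nat.cast_nonneg _).trans (hs n)
  refine Metric.tendsto_nhds.2 fun δ hδ ↦ ?_
  filter_upwards [ha √(δ / 2) (by positivity)] with n hn
  have term : ∀ i ∈ s n, a n i ^ 2 ≤ δ / 2 := fun i hi ↦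
    (Real.sq_le (by positivity)).2 (abs_le.1 (hn i hi).le)
  have total : ∑ i ∈ s n, a n i ^ 2 ≤ δ / 2 * c n := by
    calc ∑ i ∈ s n, a n i ^ 2 ≤ (s n).card • (δ / 2) := Finset.sum_le_card_nsmul _ _ _ term
      _ = δ / 2 * (s n).card := by rw [nsmul_eq_mul, mul_comm]
      _ ≤ δ / 2 * c n := by gcongr; exact hs n
  rw [Real.dist_0_eq_abs, abs_of_nonneg (div_nonneg (by positivity) (hc n))]
  exact (div_le_of_le_mul₀ (hc n) (by positivity) total).trans_lt (half_lt_self hδ)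

end Perturbation

end Averages

lemma hasSum_pow_mul_recurrence {R : Type*} [Ring R] [TopologicalSpace R] [IsTopologicalRing R]
    [T2Space R] {φ x x' : R} {u : ℤ → R} {i : ℤ}
    (hx : HasSum (fun j : ℕ ↦ φ ^ j * u (i - j)) x)
    (hx' : HasSum (fun j : ℕ ↦ φ ^ j * u (i + 1 - j)) x') : x' = φ * x + u (i + 1) := by
  have shift (j : ℕ) : φ ^ (j + 1) * u (i + 1 - (j + 1 : ℕ)) = φ * (φ ^ j * u (i - j)) := by
    rw [pow_succ', mul_assoc, Nat.cast_succ, add_sub_add_right_eq_sub]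
  have tail := (hx.mul_left φ).congr_fun shift
  rw [hasSum_nat_add_iff (f := fun j : ℕ ↦ φ ^ j * u (i + 1 - j)) 1] at tail
  simpa using hx'.unique tail

lemma memLp_of_integrable_pow {Ω : Type*} {mΩ : MeasurableSpace Ω} {μ : Measure Ω}
    [IsFiniteMeasure μ] {f : Ω → ℝ} {k n : ℕ} (hf : AEStronglyMeasurable f μ) (hkn : k ≤ n)
    (hfn : Integrable (fun ω ↦ f ω ^ n) μ) : MemLp f k μ := by
  rcases eq_or_ne n 0 with rfl | hn
  · simpa [Nat.le_zero.1 hkn] using hf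
  · have h : MemLp f n μ := by
      refine (integrable_norm_rpow_iff hf (Nat.cast_ne_zero.2 hn) (ENNReal.natCast_ne_top n)).1 ?_
      simpa only [ENNReal.toReal_natCast, Real.rpow_natCast, norm_pow] using hfn.norm
    exact h.mono_exponent (Nat.cast_le.2 hkn)

section Orthogonal

variable {Ω : Type*} {mΩ : MeasurableSpace Ω} {μ : Measure Ω}

lemma ae_tendsto_zero_of_summable_integral_norm {ι E : Type*} [Countable ι]
    [NormedAddCommGroup E] {f : ι → Ω → E} (hf : ∀ i, Integrable (f i) μ)
    (hsum : Summable fun i ↦ ∫ ω, ‖f i ω‖ ∂μ) :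
    ∀ᵐ ω ∂μ, Tendsto (fun i ↦ f i ω) cofinite (𝓝 0) := by
  have total : ∫⁻ ω, ∑' i, ‖f i ω‖ₑ ∂μ ≠ ⊤ := by
    rw [lintegral_tsum fun i ↦ (hf i).aestronglyMeasurable.enorm]
    simp only [← ofReal_integral_norm_eq_lintegral_enorm (hf _)]
    exact hsum.tsum_ofReal_ne_top
  filter_upwards [ae_lt_top' (AEMeasurable.tsum
    fun i ↦ (hf i).aestronglyMeasurable.enorm) total] with ω hω
  exact tendsto_zero_iff_enorm_tendsto_zero.2
    (ENNReal.tendsto_cofinite_zero_of_tsum_ne_top hω.ne)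

lemma ae_isLittleO_sq_of_integral_sq_le {X : ℕ → Ω → ℝ} {K : ℝ}
    (hX : ∀ m, MemLp (X m) 2 μ) (hK : ∀ m : ℕ, ∫ ω, X m ω ^ 2 ∂μ ≤ K * (m + 1) ^ 2) :
    ∀ᵐ ω ∂μ, (fun m ↦ X m ω) =o[atTop] fun m : ℕ ↦ ((m : ℝ) + 1) ^ 2 := by
  have moment (m : ℕ) :
      ∫ ω, ‖(X m ω / ((m : ℝ) + 1) ^ 2) ^ 2‖ ∂μ ≤ K * (1 / ((m : ℝ) + 1) ^ 2) := by
    simp only [Real.norm_of_nonneg (sq_nonneg _)]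
    simp only [div_pow, integral_div]
    rw [div_le_iff₀ (by positivity)]
    refine (hK m).trans_eq ?_
    field_simp
  have summable_moment : Summable fun m : ℕ ↦ ∫ ω, ‖(X m ω / ((m : ℝ) + 1) ^ 2) ^ 2‖ ∂μ := by
    refine .of_nonneg_of_le (fun m ↦ by positivity) moment (.mul_left K ?_)
    exact_mod_cast (summable_nat_add_iff 1).2 (Real.summable_one_div_nat_pow.2 one_lt_two)
  have integrable (m : ℕ) : Integrable (fun ω ↦ (X m ω / ((m : ℝ) + 1) ^ 2) ^ 2) μ := by
    simpa only [div_pow] using (hX m).integrable_sq.div_const _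
  filter_upwards [ae_tendsto_zero_of_summable_integral_norm integrable summable_moment] with ω hω
  rw [Nat.cofinite_eq_atTop] at hω
  refine Asymptotics.isLittleO_of_tendsto (fun m hm ↦ absurd hm (by positivity)) ?_
  simpa only [tendsto_zero_iff_abs_tendsto_zero, Function.comp_def, Real.sqrt_sq_eq_abs,
    Real.sqrt_zero, abs_abs] using hω.sqrt

lemma integral_sq_sum_of_orthogonal {ι : Type*} {D : ι → Ω → ℝ} (s : Finset ι)
    (hD : ∀ i, MemLp (D i) 2 μ) (horth : Pairwise fun i j ↦ ∫ ω, D i ω * D j ω ∂μ = 0) :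
    ∫ ω, (∑ i ∈ s, D i ω) ^ 2 ∂μ = ∑ i ∈ s, ∫ ω, D i ω ^ 2 ∂μ := by
  have integrable (i j : ι) : Integrable (fun ω ↦ D i ω * D j ω) μ := (hD i).integrable_mul (hD j)
  simp only [sq, Finset.sum_mul_sum]
  rw [integral_finsetSum _ fun i _ ↦ integrable_finsetSum _ fun j _ ↦ integrable i j]
  refine Finset.sum_congr rfl fun i hi ↦ ?_
  rw [integral_finsetSum _ fun j _ ↦ integrable i j]
  exact Finset.sum_eq_single_of_mem i hi fun j _ hji ↦ horth hji.symm

lemma integral_sq_sum_abs_le {ι : Type*} {D : ι → Ω → ℝ} (s : Finset ι)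
    (hD : ∀ i, MemLp (D i) 2 μ) :
    ∫ ω, (∑ i ∈ s, |D i ω|) ^ 2 ∂μ ≤ s.card * ∑ i ∈ s, ∫ ω, D i ω ^ 2 ∂μ := by
  rw [← integral_finsetSum _ fun i _ ↦ (hD i).integrable_sq, ← integral_const_mul]
  refine integral_mono_of_nonneg (.of_forall fun ω ↦ by positivity)
    ((integrable_finsetSum _ fun i _ ↦ (hD i).integrable_sq).const_mul _) (.of_forall fun ω ↦ ?_)
  simpa only [sq_abs] using sq_sum_le_card_mul_sum_sq (s := s) (f := fun i ↦ |D i ω|)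

lemma abs_sum_range_le_sqrt_block (d : ℕ → ℝ) (n : ℕ) :
    |∑ i ∈ Finset.range n, d i| ≤ |∑ i ∈ Finset.range (n.sqrt ^ 2), d i| +
      ∑ i ∈ Finset.Ico (n.sqrt ^ 2) ((n.sqrt + 1) ^ 2), |d i| := by
  rw [← Finset.sum_range_add_sum_Ico d n.sqrt_le']
  refine (abs_add_le _ _).trans (add_le_add_right ((Finset.abs_sum_le_sum_abs _ _).trans ?_) _)
  exact Finset.sum_le_sum_of_subset_of_nonneg
    (Finset.Ico_subset_Ico_right n.lt_succ_sqrt'.le) fun _ _ _ ↦ abs_nonneg _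

lemma isBigO_sqrt_add_one_sq :
    (fun n : ℕ ↦ ((n.sqrt : ℝ) + 1) ^ 2) =O[atTop] fun n : ℕ ↦ (n : ℝ) := by
  refine .of_bound 4 ?_
  filter_upwards [eventually_ge_atTop 1] with n hn
  have hsqrt : (1 : ℝ) ≤ n.sqrt := by exact_mod_cast Nat.sqrt_pos.2 hn
  have hle : (n.sqrt : ℝ) ^ 2 ≤ n := by exact_mod_cast n.sqrt_le'
  rw [Real.norm_of_nonneg (by positivity), Real.norm_of_nonneg n.cast_nonneg]
  nlinarith

/- The second moments are summable along the squares, and the block between two consecutive squares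
is short enough to be bounded by the sum of absolute values. -/
theorem ae_isLittleO_sum_of_orthogonal {D : ℕ → Ω → ℝ} {K : ℝ} (hD : ∀ n, MemLp (D n) 2 μ)
    (horth : Pairwise fun i j ↦ ∫ ω, D i ω * D j ω ∂μ = 0)
    (hK : ∀ n, ∫ ω, D n ω ^ 2 ∂μ ≤ K) :
    ∀ᵐ ω ∂μ, (fun n ↦ ∑ i ∈ Finset.range n, D i ω) =o[atTop] fun n : ℕ ↦ (n : ℝ) := by
  have hK₀ : 0 ≤ K := (integral_nonneg fun ω ↦ sq_nonneg (D 0 ω)).trans (hK 0)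
  have sum_le (s : Finset ℕ) : ∑ i ∈ s, ∫ ω, D i ω ^ 2 ∂μ ≤ s.card * K := by
    simpa only [nsmul_eq_mul] using Finset.sum_le_card_nsmul s _ K fun i _ ↦ hK i
  have squares := ae_isLittleO_sq_of_integral_sq_le (μ := μ) (K := K)
    (X := fun m ω ↦ ∑ i ∈ Finset.range (m ^ 2), D i ω)
    (fun m ↦ memLp_finsetSum _ fun i _ ↦ hD i) fun m ↦ by
      rw [integral_sq_sum_of_orthogonal _ hD horth, mul_comm]
      refine (sum_le _).trans ?_
      rw [Finset.card_range]
      push_cast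
      gcongr
      linarith
  have blocks := ae_isLittleO_sq_of_integral_sq_le (μ := μ) (K := 4 * K)
    (X := fun m ω ↦ ∑ i ∈ Finset.Ico (m ^ 2) ((m + 1) ^ 2), |D i ω|)
    (fun m ↦ memLp_finsetSum _ fun i _ ↦ (hD i).abs) fun m ↦ by
      have card : (((m + 1) ^ 2 - m ^ 2 : ℕ) : ℝ) = 2 * m + 1 := by
        rw [show (m + 1) ^ 2 - m ^ 2 = 2 * m + 1 by grind]
        push_cast
        rfl
      refine (integral_sq_sum_abs_le _ hD).trans
        ((mul_le_mul_of_nonneg_left (sum_le _) (Nat.cast_nonneg _)).trans ?_)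
      rw [Nat.card_Ico, card]
      nlinarith [mul_nonneg hK₀ (m.cast_nonneg (α := ℝ))]
  filter_upwards [squares, blocks] with ω hsq hbl
  have sqrt_atTop : Tendsto Nat.sqrt atTop atTop :=
    tendsto_atTop_atTop.2 fun b ↦ ⟨b ^ 2, fun n hn ↦ Nat.le_sqrt'.2 hn⟩
  have along_sqrt := ((hsq.abs_left.add hbl).comp_tendsto sqrt_atTop).trans_isBigO
    isBigO_sqrt_add_one_sq
  refine Asymptotics.IsBigO.trans_isLittleO (.of_norm_le fun n ↦ ?_) along_sqrt
  exact abs_sum_range_le_sqrt_block (D · ω) n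

end Orthogonal

section Autoregression

variable {Ω : Type*}

/-- The AR(1) process `Y (n + 1) = φ Y n + V n` with innovations `V`, started at `Y 0 = 0`; the
innovation that enters `Y (n + 1)` carries the index `n`. -/
def autoregression (φ : ℝ) (V : ℕ → Ω → ℝ) : ℕ → Ω → ℝ
  | 0 => 0
  | n + 1 => φ • autoregression φ V n + V n

/-- The σ-algebra generated by the innovations with index strictly below `n`, with respect to which
`autoregression φ V n` is measurable. -/
abbrev strictPast (V : ℕ → Ω → ℝ) (n : ℕ) : MeasurableSpace Ω :=
  ⨆ j ∈ Iio n, MeasurableSpace.comap (V j) inferInstance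

variable {V : ℕ → Ω → ℝ} {φ : ℝ}

lemma eq_autoregression_add_pow_mul {X : ℕ → Ω → ℝ} {ω : Ω}
    (hX : ∀ n, X (n + 1) ω = φ * X n ω + V n ω) (n : ℕ) :
    X n ω = autoregression φ V n ω + φ ^ n * X 0 ω := by
  induction n with
  | zero => simp [autoregression]
  | succ n ih =>
    rw [hX, ih]
    simp only [autoregression, Pi.add_apply, Pi.smul_apply, smul_eq_mul]
    ring

lemma measurable_strictPast {j n : ℕ} (hjn : j < n) : Measurable[strictPast V n] (V j) :=
  .of_comap_le (le_iSup₂_of_le j hjn le_rfl)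

lemma measurable_autoregression_strictPast {m n : ℕ} (hmn : m ≤ n) :
    Measurable[strictPast V n] (autoregression φ V m) := by
  induction m with
  | zero => exact @measurable_zero _ _ _ (strictPast V n) _
  | succ m ih => exact ((ih (by lia)).const_smul φ).add (measurable_strictPast hmn)

variable {mΩ : MeasurableSpace Ω} {μ : Measure Ω}

lemma indepFun_of_measurable_strictPast (hVm : ∀ n, Measurable (V n)) (hV : iIndepFun V μ)
    {n : ℕ} {g : Ω → ℝ} (hg : Measurable[strictPast V n] g) : IndepFun g (V n) μ := by
  rw [IndepFun_iff_Indep]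
  exact indep_of_indep_of_le
    (indep_iSup_of_disjoint (fun j ↦ (hVm j).comap_le) hV (S := Iio n) (T := {n}) (by simp))
    hg.comap_le (le_iSup₂_of_le n rfl le_rfl)

lemma indepFun_autoregression (hVm : ∀ n, Measurable (V n)) (hV : iIndepFun V μ) (n : ℕ) :
    IndepFun (autoregression φ V n) (V n) μ :=
  indepFun_of_measurable_strictPast hVm hV (measurable_autoregression_strictPast le_rfl)

lemma memLp_autoregression {p : ENNReal} (hV : ∀ n, MemLp (V n) p μ) (n : ℕ) :
    MemLp (autoregression φ V n) p μ := by
  induction n with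
  | zero => exact .zero
  | succ n ih => exact (ih.const_smul φ).add (hV n)

lemma integral_autoregression_mul_mul_eq_zero (hVm : ∀ n, Measurable (V n)) (hV : iIndepFun V μ)
    (hV₀ : ∀ n, ∫ ω, V n ω ∂μ = 0) {i j : ℕ} (hij : i < j) :
    ∫ ω, autoregression φ V i ω * V i ω * (autoregression φ V j ω * V j ω) ∂μ = 0 := by
  set g := autoregression φ V i * V i * autoregression φ V j
  have hg : Measurable[strictPast V j] g :=
    ((measurable_autoregression_strictPast hij.le).mul (measurable_strictPast hij)).mul
      (measurable_autoregression_strictPast le_rfl)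
  have le_mΩ : strictPast V j ≤ mΩ := iSup₂_le fun k _ ↦ (hVm k).comap_le
  have h := (indepFun_of_measurable_strictPast hVm hV hg).integral_mul_eq_mul_integral
    (hg.mono le_mΩ le_rfl).aestronglyMeasurable (hVm j).aestronglyMeasurable
  rw [hV₀, mul_zero] at h
  simpa only [g, Pi.mul_apply, mul_assoc] using h

lemma integral_autoregression_succ_sq (hVm : ∀ n, Measurable (V n)) (hV : iIndepFun V μ)
    (hV₂ : ∀ n, MemLp (V n) 2 μ) (hV₀ : ∀ n, ∫ ω, V n ω ∂μ = 0) (n : ℕ) :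
    ∫ ω, autoregression φ V (n + 1) ω ^ 2 ∂μ =
      φ ^ 2 * ∫ ω, autoregression φ V n ω ^ 2 ∂μ + ∫ ω, V n ω ^ 2 ∂μ := by
  have hY := memLp_autoregression (φ := φ) hV₂ n
  have cross : ∫ ω, autoregression φ V n ω * V n ω ∂μ = 0 := by
    rw [(indepFun_autoregression hVm hV n).integral_fun_mul_eq_mul_integral
      hY.aestronglyMeasurable (hV₂ n).aestronglyMeasurable, hV₀, mul_zero]
  have expand (ω : Ω) : autoregression φ V (n + 1) ω ^ 2 = φ ^ 2 * autoregression φ V n ω ^ 2 +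
      2 * φ * (autoregression φ V n ω * V n ω) + V n ω ^ 2 := by
    simp only [autoregression, Pi.add_apply, Pi.smul_apply, smul_eq_mul]
    ring
  have hY_sq := hY.integrable_sq.const_mul (φ ^ 2)
  have hYV : Integrable (fun ω ↦ 2 * φ * (autoregression φ V n ω * V n ω)) μ :=
    (hY.integrable_mul (hV₂ n)).const_mul (2 * φ)
  simp only [expand]
  rw [integral_add (by exact hY_sq.add hYV) (hV₂ n).integrable_sq, integral_add hY_sq hYV,
    integral_const_mul, integral_const_mul, cross, mul_zero, add_zero]

lemma integral_autoregression_sq_le {s : ℝ} (hφ : |φ| < 1) (hVm : ∀ n, Measurable (V n))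
    (hV : iIndepFun V μ) (hV₂ : ∀ n, MemLp (V n) 2 μ) (hV₀ : ∀ n, ∫ ω, V n ω ∂μ = 0)
    (hs : ∀ n, ∫ ω, V n ω ^ 2 ∂μ ≤ s) (n : ℕ) :
    ∫ ω, autoregression φ V n ω ^ 2 ∂μ ≤ s / (1 - φ ^ 2) := by
  have hs₀ : 0 ≤ s := (integral_nonneg fun ω ↦ sq_nonneg (V 0 ω)).trans (hs 0)
  have hφ₂ : 0 < 1 - φ ^ 2 := sub_pos.2 ((sq_lt_one_iff_abs_lt_one φ).2 hφ)
  induction n with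
  | zero => simpa [autoregression] using by positivity
  | succ n ih =>
    calc ∫ ω, autoregression φ V (n + 1) ω ^ 2 ∂μ
        = φ ^ 2 * ∫ ω, autoregression φ V n ω ^ 2 ∂μ + ∫ ω, V n ω ^ 2 ∂μ :=
          integral_autoregression_succ_sq hVm hV hV₂ hV₀ n
      _ ≤ φ ^ 2 * (s / (1 - φ ^ 2)) + s := by gcongr; exact hs n
      _ = s / (1 - φ ^ 2) := by field_simp; ring

theorem ae_isLittleO_sum_autoregression_mul {s : ℝ} (hφ : |φ| < 1) (hVm : ∀ n, Measurable (V n))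
    (hV : iIndepFun V μ) (hV₂ : ∀ n, MemLp (V n) 2 μ) (hV₀ : ∀ n, ∫ ω, V n ω ∂μ = 0)
    (hs : ∀ n, ∫ ω, V n ω ^ 2 ∂μ ≤ s) :
    ∀ᵐ ω ∂μ, (fun n ↦ ∑ i ∈ Finset.range n, autoregression φ V i ω * V i ω) =o[atTop]
      fun n : ℕ ↦ (n : ℝ) := by
  have hY (n : ℕ) := memLp_autoregression (φ := φ) hV₂ n
  have indep_sq (n : ℕ) : IndepFun (fun ω ↦ autoregression φ V n ω ^ 2) (fun ω ↦ V n ω ^ 2) μ :=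
    (indepFun_autoregression hVm hV n).comp (measurable_id.pow_const 2) (measurable_id.pow_const 2)
  have memLp (n : ℕ) : MemLp (fun ω ↦ autoregression φ V n ω * V n ω) 2 μ := by
    refine (memLp_two_iff_integrable_sq ((hY n).1.mul (hV₂ n).1)).2 ?_
    simpa only [Pi.mul_apply, mul_pow] using!
      (indep_sq n).integrable_mul (hY n).integrable_sq (hV₂ n).integrable_sq
  refine ae_isLittleO_sum_of_orthogonal (K := s / (1 - φ ^ 2) * s) memLp (fun i j hij ↦ ?_)
    fun n ↦ ?_
  · rcases hij.lt_or_gt with h | h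
    · exact integral_autoregression_mul_mul_eq_zero hVm hV hV₀ h
    · simpa only [mul_comm] using integral_autoregression_mul_mul_eq_zero hVm hV hV₀ h (φ := φ)
  · have bound := integral_autoregression_sq_le hφ hVm hV hV₂ hV₀ hs n
    simp only [mul_pow]
    rw [(indep_sq n).integral_fun_mul_eq_mul_integral ((hY n).1.pow 2) ((hV₂ n).1.pow 2)]
    exact mul_le_mul bound (hs n) (integral_nonneg fun ω ↦ sq_nonneg _)
      ((integral_nonneg fun ω ↦ sq_nonneg _).trans bound)

variable {Z : Ω → ℝ}

lemma ae_tendsto_average_sq_of_identDistrib (hV : Pairwise fun i j ↦ IndepFun (V i) (V j) μ)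
    (hVZ : ∀ n, IdentDistrib (V n) Z μ μ) (hZ : MemLp Z 2 μ) :
    ∀ᵐ ω ∂μ, Tendsto (fun n : ℕ ↦ (∑ i ∈ Finset.range n, V i ω ^ 2) / n) atTop
      (𝓝 (∫ ω, Z ω ^ 2 ∂μ)) := by
  have hVZ_sq (n : ℕ) : IdentDistrib (fun ω ↦ V n ω ^ 2) (fun ω ↦ Z ω ^ 2) μ μ :=
    (hVZ n).comp (measurable_id.pow_const 2)
  rw [← (hVZ_sq 0).integral_eq]
  exact strong_law_ae_real (fun n ω ↦ V n ω ^ 2) ((hVZ_sq 0).integrable_iff.2 hZ.integrable_sq)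
    (fun i j hij ↦ (hV hij).comp (measurable_id.pow_const 2) (measurable_id.pow_const 2))
    fun n ↦ (hVZ_sq n).trans (hVZ_sq 0).symm

theorem ae_tendsto_average_sq_autoregression (hφ : |φ| < 1) (hVm : ∀ n, Measurable (V n))
    (hV : iIndepFun V μ) (hVZ : ∀ n, IdentDistrib (V n) Z μ μ) (hZ : MemLp Z 2 μ)
    (hZ₀ : ∫ ω, Z ω ∂μ = 0) :
    ∀ᵐ ω ∂μ, Tendsto (fun n : ℕ ↦ (∑ i ∈ Finset.range n, autoregression φ V i ω ^ 2) / n) atTop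
      (𝓝 ((∫ ω, Z ω ^ 2 ∂μ) / (1 - φ ^ 2))) := by
  have hV₂ (n : ℕ) : MemLp (V n) 2 μ := (hVZ n).memLp_iff.2 hZ
  have hV₀ (n : ℕ) : ∫ ω, V n ω ∂μ = 0 := (hVZ n).integral_eq.trans hZ₀
  have hs (n : ℕ) : ∫ ω, V n ω ^ 2 ∂μ ≤ ∫ ω, Z ω ^ 2 ∂μ :=
    ((hVZ n).comp (measurable_id.pow_const 2)).integral_eq.le
  filter_upwards [ae_tendsto_average_sq_of_identDistrib (fun i j ↦ hV.indepFun) hVZ hZ,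
    ae_isLittleO_sum_autoregression_mul hφ hVm hV hV₂ hV₀ hs] with ω squares cross
  exact tendsto_average_sq_of_recurrence hφ (fun n ↦ rfl) squares
    (isLittleO_natCast_iff_tendsto_div.1 cross)

end Autoregression

theorem stmt13_general {Ω : Type*} [MeasurableSpace Ω] {μ : Measure Ω} {U : ℕ → Ω → ℝ} {Z : Ω → ℝ}
    (hUmeas : ∀ n, Measurable (U n)) (hUindep : iIndepFun U μ)
    (hUident : ∀ n, IdentDistrib (U n) Z μ μ) (hZ : MemLp Z 2 μ) (hZmean : ∫ ω, Z ω ∂μ = 0)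
    {φ : ℝ} (hφ : |φ| < 1) {X : ℕ → Ω → ℝ}
    (hX : ∀ᵐ ω ∂μ, ∀ n, X (n + 1) ω = φ * X n ω + U n ω) {a : ℕ → ℕ → Ω → ℝ}
    (ha : ∀ᵐ ω ∂μ,
      Tendsto (fun n : ℕ ↦ (∑ i ∈ Finset.Icc 2 n, a n i ω ^ 2) / n) atTop (𝓝 0)) :
    ∀ᵐ ω ∂μ, Tendsto (fun n : ℕ ↦ (1 / (n : ℝ)) * ∑ i ∈ Finset.Icc 2 n, (X i ω + a n i ω) ^ 2)
      atTop (𝓝 ((∫ ω, Z ω ^ 2 ∂μ) / (1 - φ ^ 2))) := by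
  filter_upwards [ae_tendsto_average_sq_autoregression hφ hUmeas hUindep hUident hZ hZmean, hX, ha]
    with ω stationary hXω haω
  have transient : Tendsto
      (fun n : ℕ ↦ (∑ i ∈ Finset.Icc 2 n, (φ ^ i * X 0 ω) ^ 2) / n) atTop (𝓝 0) := by
    have decay := ((tendsto_pow_atTop_nhds_zero_of_abs_lt_one hφ).mul_const (X 0 ω)).pow 2
    rw [zero_mul, zero_pow two_ne_zero] at decay
    exact tendsto_sum_Icc_div 2 (decay.cesaro.congr fun n ↦ inv_mul_eq_div _ _)
  have perturbed := tendsto_sum_sq_add_div (y := fun _ i ↦ autoregression φ U i ω)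
    (tendsto_sum_Icc_div 2 stationary) (tendsto_sum_sq_add_div transient haω)
  refine perturbed.congr fun n ↦ ?_
  simp only [← add_assoc, ← eq_autoregression_add_pow_mul hXω, one_div_mul_eq_div]

/-- If the triangular array `a` satisfies `sup_{1≤i≤n} |a_{n,i}| → 0`
almost surely, then `(1/n) ∑_{i=2}^n (ε_i + a_{n,i})²` converges to `σ²/(1-φ²)`
almost surely. -/
theorem stmt13
    {Ω : Type*} [MeasurableSpace Ω] (μ : Measure Ω) [IsProbabilityMeasure μ]
    (U : ℤ → Ω → ℝ) (hUmeas : ∀ j, Measurable (U j))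
    (hUindep : iIndepFun U μ)
    (hUident : ∀ j, μ.map (U j) = μ.map (U 0))
    (σ : ℝ) (hσ : 0 < σ)
    (hUmean : ∫ ω, U 0 ω ∂μ = 0)
    (hUvar : ∫ ω, (U 0 ω) ^ 2 ∂μ = σ ^ 2)
    (hU8 : Integrable (fun ω => (U 0 ω) ^ 8) μ)
    (φ : ℝ) (hφ0 : φ ≠ 0) (hφ1 : |φ| < 1)
    (ε : ℤ → Ω → ℝ) (hεmeas : ∀ i, Measurable (ε i))
    (hεsum : ∀ᵐ ω ∂μ, ∀ i : ℤ, HasSum (fun j : ℕ => φ ^ j * U (i - (j : ℤ)) ω) (ε i ω))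
    (a : ℕ → ℕ → Ω → ℝ)
    (ha : ∀ᵐ ω ∂μ, ∀ e > (0 : ℝ), ∃ N : ℕ, ∀ n ≥ N, ∀ i ∈ Finset.Icc 1 n, |a n i ω| < e) :
    ∀ᵐ ω ∂μ, Tendsto (fun n : ℕ =>
      (1 / (n : ℝ)) * ∑ i ∈ Finset.Icc 2 n, (ε (i : ℤ) ω + a n i ω) ^ 2)
      atTop (𝓝 (σ ^ 2 / (1 - φ ^ 2))) := by
  rw [← hUvar]
  exact stmt13_general (fun n ↦ hUmeas (n + 1)) (hUindep.precomp fun m n h ↦ by simpa using h)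
    (fun n ↦ ⟨(hUmeas _).aemeasurable, (hUmeas 0).aemeasurable, hUident _⟩)
    (memLp_of_integrable_pow (k := 2) (hUmeas 0).aestronglyMeasurable (by norm_num) hU8) hUmean hφ1
    (hεsum.mono fun ω hω n ↦ hasSum_pow_mul_recurrence (u := (U · ω)) (hω n) (hω (n + 1)))
    (ha.mono fun ω hω ↦ tendsto_sum_sq_div_zero_of_forall_abs_lt (fun n ↦ by simp) fun δ hδ ↦
      eventually_atTop.2 <| (hω δ hδ).imp fun N hN n hn i hi ↦
        hN n hn i (Finset.Icc_subset_Icc_left one_le_two hi))
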